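/- Under the MS-LS model, if additionally α_i + α_j = α for all pairs i, j, then the expected nodal strength of a node given the previous state l satisfies E(Y_t | s_{t-1} = l) = G_l′(1) = Σ_{k=1}^K q_{lk} G̃_k′(1) = (N−1) e^α Σ_{k=1}^K q_{lk} (4σ_k²β + 1)^{−d/2}, where G_l and G̃_k denote the conditional probability generating functions of the nodal strength given s_{t-1} = l and given s_t = k respectively. -/

import Mathlib

open MeasureTheory ProbabilityTheory Real

noncomputable section

/-- Density of the centered isotropic Gaussian `N(0, σ² I_d)` on `ℝ^d`. -/
def gaussPdf (d : ℕ) (σ2 : ℝ) (x : EuclideanSpace ℝ (Fin d)) : ℝ :=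
  (2 * Real.pi * σ2) ^ (-(d : ℝ) / 2) * Real.exp (-‖x‖ ^ 2 / (2 * σ2))

/-- The centered isotropic Gaussian measure `N(0, σ² I_d)` on `ℝ^d`. -/
def gaussMeasure (d : ℕ) (σ2 : ℝ) : Measure (EuclideanSpace ℝ (Fin d)) :=
  volume.withDensity fun x => ENNReal.ofReal (gaussPdf d σ2 x)

/-- Unordered pairs of distinct nodes, represented as ordered pairs `(i, j)` with `i < j`. -/
abbrev Pairs (N : ℕ) : Type := {p : Fin N × Fin N // p.1 < p.2}

/-- Joint law of the latent positions `(Z_i)_{i}` (i.i.d. `N(0, σ² I_d)`) and of the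
edge weights `(Y_{ij})_{i<j}`, which given the latent positions are conditionally independent
Poisson variables with intensity `exp (α_i + α_j - β ‖Z_i - Z_j‖²)`. -/
def jointLaw (d N : ℕ) (β : ℝ) (α : Fin N → ℝ) (σ2 : ℝ) :
    Measure ((Fin N → EuclideanSpace ℝ (Fin d)) × (Pairs N → ℕ)) :=
  (volume.withDensity fun z : Fin N → EuclideanSpace ℝ (Fin d) =>
      ENNReal.ofReal (∏ i, gaussPdf d σ2 (z i))).bind fun z =>
    (Measure.pi fun p : Pairs N =>
        poissonMeasure
          (Real.exp (α p.1.1 + α p.1.2 - β * ‖z p.1.1 - z p.1.2‖ ^ 2)).toNNReal).map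
      fun y => (z, y)

/-- The Markov-switching latent space (MS-LS) network model: a hidden `K`-state Markov chain
`s`, state-dependent i.i.d. Gaussian latent positions `Z`, and symmetric edge weights `Y`
that conditionally on the current state (and given the latent positions) are independent
Poisson variables with log-intensity `α i + α j - β ‖Z i k - Z j k‖²`. -/
structure MSLS (Ω : Type) [MeasurableSpace Ω] where
  /-- the underlying probability measure -/
  P : Measure Ω
  isProb : IsProbabilityMeasure P
  /-- the dimension of the latent space -/
  d : ℕ
  /-- the number of nodes -/
  N : ℕ
  /-- the number of states of the hidden Markov chain -/
  K : ℕ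
  β : ℝ
  β_pos : 0 < β
  /-- individual effects -/
  α : Fin N → ℝ
  /-- state-specific variances of the latent positions -/
  σ2 : Fin K → ℝ
  σ2_pos : ∀ k, 0 < σ2 k
  /-- transition probabilities of the hidden Markov chain -/
  q : Fin K → Fin K → ℝ
  q_nonneg : ∀ l k, 0 ≤ q l k
  q_sum : ∀ l, ∑ k, q l k = 1
  /-- the hidden Markov chain -/
  s : ℕ → Ω → Fin K
  s_meas : ∀ t, Measurable (s t)
  /-- the latent positions in each state -/
  Z : Fin N → Fin K → Ω → EuclideanSpace ℝ (Fin d)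
  Z_meas : ∀ i k, Measurable (Z i k)
  /-- the edge weights -/
  Y : Fin N → Fin N → ℕ → Ω → ℕ
  Y_meas : ∀ i j t, Measurable (Y i j t)
  Y_symm : ∀ i j t ω, Y i j t ω = Y j i t ω
  state_pos : ∀ t k, P {ω | s t ω = k} ≠ 0
  /-- Markov transition probabilities -/
  trans_prob : ∀ t l k, ((P[|{ω | s t ω = l}]) {ω | s (t + 1) ω = k}).toReal = q l k
  /-- conditionally on the current state, the latent positions and the edge weights follow
  the Poisson latent space law -/
  cond_law_state : ∀ t k,
    (P[|{ω | s t ω = k}]).map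
        (fun ω => ((fun i => Z i k ω), fun p : Pairs N => Y p.1.1 p.1.2 t ω)) =
      jointLaw d N β α (σ2 k)
  /-- conditionally on the previous and current state, the latent positions and the edge
  weights follow the Poisson latent space law of the current state -/
  cond_law_pair : ∀ t l k, q l k ≠ 0 →
    (P[|{ω | s t ω = l} ∩ {ω | s (t + 1) ω = k}]).map
        (fun ω => ((fun i => Z i k ω), fun p : Pairs N => Y p.1.1 p.1.2 (t + 1) ω)) =
      jointLaw d N β α (σ2 k)

attribute [instance] MSLS.isProb

/-- The nodal strength `Y_{it} = Σ_{j ≠ i} Y_{ijt}` of node `i` at time `t`. -/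
def MSLS.strength {Ω : Type} [MeasurableSpace Ω] (M : MSLS Ω) (i : Fin M.N) (t : ℕ)
    (ω : Ω) : ℕ :=
  ∑ j ∈ Finset.univ.erase i, M.Y i j t ω

end

/-!
Conditionally on the latent positions an edge weight has mean
`exp (α i + α j) * exp (-β * ‖Z i - Z j‖ ^ 2)`, so averaging over the independent Gaussian
positions leaves the Laplace transform of `‖Z i - Z j‖ ^ 2` at `β`. Completing the square twice
evaluates it to `(4 * σ2 * β + 1) ^ (-d / 2)`. Conditioning on the previous state `l` mixes these
within-state means with weights `q l k`. Expectations are computed as Lebesgue integrals in `ℝ≥0∞`,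
where no integrability has to be known beforehand; the values turn out to be finite.
-/

open scoped ENNReal NNReal

section FiniteProducts

variable {ι : Type*} {E : ι → Type*} [∀ i, MeasurableSpace (E i)]

lemma lmarginal_finsetProd [DecidableEq ι] (μ : ∀ i, Measure (E i)) [∀ i, SigmaFinite (μ i)]
    {f : ∀ i, E i → ℝ≥0∞} (hf : ∀ i, Measurable (f i)) (s : Finset ι) :
    ∫⋯∫⁻_s, (fun x ↦ ∏ i ∈ s, f i (x i)) ∂μ = fun _ ↦ ∏ i ∈ s, ∫⁻ x, f i x ∂μ i := by
  induction s using Finset.induction with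
  | empty => simp
  | insert i s hi ih =>
    have integrate_coord (x : ∀ i, E i) :
        ∫⁻ y, ∏ j ∈ insert i s, f j (Function.update x i y j) ∂μ i =
          (∫⁻ y, f i y ∂μ i) * ∏ j ∈ s, f j (x j) := by
      rw [← lintegral_mul_const _ (hf i)]
      refine lintegral_congr fun y ↦ ?_
      rw [Finset.prod_insert hi, Function.update_self]
      congr 1
      exact Finset.prod_congr rfl fun j hj ↦ by
        rw [Function.update_of_ne (ne_of_mem_of_not_mem hj hi)]
    rw [lmarginal_insert' _ (by fun_prop) hi]
    simp_rw [integrate_coord, Finset.prod_insert hi]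
    funext x
    exact (lintegral_const_mul _ (by fun_prop)).trans (congrArg _ (congrFun ih x))

variable [Fintype ι]

lemma lintegral_fintypeProd_eq_prod (μ : ∀ i, Measure (E i)) [∀ i, SigmaFinite (μ i)]
    {f : ∀ i, E i → ℝ≥0∞} (hf : ∀ i, Measurable (f i)) :
    ∫⁻ x, ∏ i, f i (x i) ∂Measure.pi μ = ∏ i, ∫⁻ x, f i x ∂μ i := by
  classical
  rcases isEmpty_or_nonempty (∀ i, E i) with hE | ⟨⟨x⟩⟩
  · obtain ⟨i, hi⟩ := isEmpty_pi.1 hE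
    rw [lintegral_of_isEmpty, Finset.prod_eq_zero (Finset.mem_univ i) (lintegral_of_isEmpty _ _)]
  · rw [lintegral_eq_lmarginal_univ x, lmarginal_finsetProd μ hf]

lemma pi_withDensity (μ : ∀ i, Measure (E i)) [∀ i, SigmaFinite (μ i)]
    {f : ∀ i, E i → ℝ≥0∞} (hf : ∀ i, Measurable (f i))
    [∀ i, SigmaFinite ((μ i).withDensity (f i))] :
    Measure.pi (fun i ↦ (μ i).withDensity (f i)) =
      (Measure.pi μ).withDensity fun x ↦ ∏ i, f i (x i) := by
  refine Measure.pi_eq fun s hs ↦ ?_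
  rw [withDensity_apply _ (MeasurableSet.univ_pi hs), Measure.restrict_pi_pi,
    lintegral_fintypeProd_eq_prod _ hf]
  exact Finset.prod_congr rfl fun i _ ↦ (withDensity_apply _ (hs i)).symm

lemma measurePreserving_prodMk_eval (μ : ∀ i, Measure (E i)) [∀ i, IsProbabilityMeasure (μ i)]
    {i j : ι} (hij : i ≠ j) :
    MeasurePreserving (fun x : ∀ i, E i ↦ (x i, x j)) (Measure.pi μ) ((μ i).prod (μ j)) := by
  have indep : IndepFun (fun x : ∀ i, E i ↦ x i) (fun x ↦ x j) (Measure.pi μ) :=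
    (iIndepFun_pi (X := fun _ x ↦ x) fun _ ↦ aemeasurable_id).indepFun hij
  refine ⟨by fun_prop, ?_⟩
  rw [(indepFun_iff_map_prod_eq_prod_map_map (measurable_pi_apply i).aemeasurable
      (measurable_pi_apply j).aemeasurable).1 indep,
    (measurePreserving_eval μ i).map_eq, (measurePreserving_eval μ j).map_eq]

lemma measurable_measure_pi {α : Type*} [MeasurableSpace α] {κ : α → ∀ i, Measure (E i)}
    [∀ a i, IsProbabilityMeasure (κ a i)] (hκ : ∀ i, Measurable fun a ↦ κ a i) :
    Measurable fun a ↦ Measure.pi (κ a) := by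
  refine .measure_of_isPiSystem_of_isProbabilityMeasure generateFrom_pi.symm isPiSystem_pi ?_
  rintro _ ⟨s, hs, rfl⟩
  simp_rw [Measure.pi_pi]
  exact Finset.measurable_prod _ fun i _ ↦
    (Measure.measurable_coe (hs i (Set.mem_univ i))).comp (hκ i)

end FiniteProducts

section Poisson

lemma measurable_poissonMeasure : Measurable poissonMeasure := by
  refine Measure.measurable_of_measurable_coe _ fun s hs ↦ ?_
  simp_rw [poissonMeasure, Measure.sum_apply _ hs, Measure.smul_apply]
  fun_prop

lemma lintegral_natCast_poissonMeasure (r : ℝ≥0) : ∫⁻ n, (n : ℝ≥0∞) ∂poissonMeasure r = r := by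
  have size_bias (n : ℕ) :
      ((n + 1 : ℕ) : ℝ≥0∞) * poissonMeasure r {n + 1} = r * poissonMeasure r {n} := by
    rw [poissonMeasure_singleton, poissonMeasure_singleton, ← ENNReal.ofReal_natCast,
      ← ENNReal.ofReal_coe_nnreal, ← ENNReal.ofReal_mul (by positivity),
      ← ENNReal.ofReal_mul (by positivity), Nat.factorial_succ]
    congr 1
    push_cast
    field_simp
    ring
  have total_mass : ∑' n, poissonMeasure r {n} = 1 := by
    simpa using (lintegral_countable' (μ := poissonMeasure r) fun _ ↦ 1).symm
  rw [lintegral_countable', tsum_eq_zero_add' ENNReal.summable]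
  simp_rw [size_bias]
  rw [ENNReal.tsum_mul_left, total_mass, Nat.cast_zero, zero_mul, zero_add, mul_one]

end Poisson

section GaussianIntegrals

variable {V : Type*} [NormedAddCommGroup V] [InnerProductSpace ℝ V]

lemma mul_sq_norm_add_mul_sq_norm_sub {b c : ℝ} (h : b + c ≠ 0) (x y : V) :
    b * ‖y‖ ^ 2 + c * ‖x - y‖ ^ 2 =
      b * c / (b + c) * ‖x‖ ^ 2 + (b + c) * ‖y - (c / (b + c)) • x‖ ^ 2 := by
  rw [norm_sub_sq_real, norm_sub_sq_real, norm_smul, mul_pow, real_inner_smul_right,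
    Real.norm_eq_abs, sq_abs, real_inner_comm x y]
  field_simp
  ring

variable [FiniteDimensional ℝ V] [MeasurableSpace V] [BorelSpace V]

lemma lintegral_exp_neg_mul_sq_norm {b : ℝ} (hb : 0 < b) :
    ∫⁻ v : V, ENNReal.ofReal (exp (-b * ‖v‖ ^ 2)) =
      ENNReal.ofReal ((π / b) ^ (Module.finrank ℝ V / 2 : ℝ)) := by
  have integral_eq := GaussianFourier.integral_rexp_neg_mul_sq_norm (V := V) hb
  have integrable : Integrable fun v : V ↦ exp (-b * ‖v‖ ^ 2) :=
    .of_integral_ne_zero <| by rw [integral_eq]; positivity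
  rw [← ofReal_integral_eq_lintegral_ofReal integrable (ae_of_all _ fun _ ↦ (exp_pos _).le),
    integral_eq]

lemma lintegral_exp_neg_sq_norm_add_sq_norm_sub {b c : ℝ} (h : 0 < b + c) (x : V) :
    ∫⁻ y, ENNReal.ofReal (exp (-(b * ‖y‖ ^ 2 + c * ‖x - y‖ ^ 2))) =
      ENNReal.ofReal (exp (-(b * c / (b + c)) * ‖x‖ ^ 2)) *
        ENNReal.ofReal ((π / (b + c)) ^ (Module.finrank ℝ V / 2 : ℝ)) := by
  have completed_square (y : V) :
      ENNReal.ofReal (exp (-(b * ‖y‖ ^ 2 + c * ‖x - y‖ ^ 2))) =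
        ENNReal.ofReal (exp (-(b * c / (b + c)) * ‖x‖ ^ 2)) *
          ENNReal.ofReal (exp (-(b + c) * ‖y - (c / (b + c)) • x‖ ^ 2)) := by
    rw [mul_sq_norm_add_mul_sq_norm_sub h.ne', ← ENNReal.ofReal_mul (exp_pos _).le, ← exp_add,
      neg_mul, neg_mul, ← neg_add]
  simp_rw [completed_square]
  rw [lintegral_const_mul _ (by fun_prop),
    lintegral_sub_right_eq_self fun y : V ↦ ENNReal.ofReal (exp (-(b + c) * ‖y‖ ^ 2)),
    lintegral_exp_neg_mul_sq_norm h]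

lemma lintegral_lintegral_exp_neg_sq_norm_add_sq_norm_add_sq_norm_sub {a b c : ℝ}
    (hbc : 0 < b + c) (habc : 0 < a * b + b * c + c * a) :
    ∫⁻ x : V, ∫⁻ y, ENNReal.ofReal (exp (-(a * ‖x‖ ^ 2 + b * ‖y‖ ^ 2 + c * ‖x - y‖ ^ 2))) =
      ENNReal.ofReal ((π ^ 2 / (a * b + b * c + c * a)) ^ (Module.finrank ℝ V / 2 : ℝ)) := by
  have coeff : a + b * c / (b + c) = (a * b + b * c + c * a) / (b + c) := by
    field_simp
    ring
  have inner_integral (x : V) :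
      ∫⁻ y, ENNReal.ofReal (exp (-(a * ‖x‖ ^ 2 + b * ‖y‖ ^ 2 + c * ‖x - y‖ ^ 2))) =
        ENNReal.ofReal (exp (-((a * b + b * c + c * a) / (b + c)) * ‖x‖ ^ 2)) *
          ENNReal.ofReal ((π / (b + c)) ^ (Module.finrank ℝ V / 2 : ℝ)) := by
    simp_rw [add_assoc (a * ‖x‖ ^ 2), neg_add (a * ‖x‖ ^ 2), exp_add (-(a * ‖x‖ ^ 2)),
      ENNReal.ofReal_mul (exp_pos _).le]
    rw [lintegral_const_mul _ (by fun_prop), lintegral_exp_neg_sq_norm_add_sq_norm_sub hbc,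
      ← mul_assoc, ← ENNReal.ofReal_mul (exp_pos _).le, ← exp_add, ← coeff, neg_mul, neg_mul,
      ← neg_add, ← add_mul]
  simp_rw [inner_integral]
  rw [lintegral_mul_const _ (by fun_prop), lintegral_exp_neg_mul_sq_norm (by positivity),
    ← ENNReal.ofReal_mul (by positivity), ← mul_rpow (by positivity) (by positivity)]
  congr 2
  field_simp

end GaussianIntegrals

section GaussianMeasure

variable {d : ℕ} {σ2 : ℝ}

lemma gaussPdf_nonneg (hσ : 0 ≤ σ2) (x : EuclideanSpace ℝ (Fin d)) : 0 ≤ gaussPdf d σ2 x := by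
  unfold gaussPdf
  positivity

@[fun_prop]
lemma measurable_gaussPdf (d : ℕ) (σ2 : ℝ) : Measurable (gaussPdf d σ2) := by
  unfold gaussPdf
  fun_prop

lemma gaussPdf_eq_mul_exp_neg_mul (x : EuclideanSpace ℝ (Fin d)) :
    gaussPdf d σ2 x = (2 * π * σ2) ^ (-(d : ℝ) / 2) * exp (-(1 / (2 * σ2)) * ‖x‖ ^ 2) := by
  rw [gaussPdf]
  ring_nf

lemma isProbabilityMeasure_gaussMeasure (d : ℕ) (hσ : 0 < σ2) :
    IsProbabilityMeasure (gaussMeasure d σ2) := by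
  refine ⟨?_⟩
  have normalization_nonneg : 0 ≤ (2 * π * σ2) ^ (-(d : ℝ) / 2) := by positivity
  have base : π / (1 / (2 * σ2)) = 2 * π * σ2 := by
    field_simp
  rw [gaussMeasure, withDensity_apply _ .univ, Measure.restrict_univ]
  simp_rw [gaussPdf_eq_mul_exp_neg_mul, ENNReal.ofReal_mul normalization_nonneg]
  rw [lintegral_const_mul _ (by fun_prop), lintegral_exp_neg_mul_sq_norm (by positivity),
    ← ENNReal.ofReal_mul normalization_nonneg, finrank_euclideanSpace_fin, base, neg_div,
    rpow_neg (by positivity), inv_mul_cancel₀ (by positivity), ENNReal.ofReal_one]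

lemma pi_gaussMeasure_eq_withDensity (ι : Type*) [Fintype ι] (d : ℕ) (hσ : 0 < σ2) :
    Measure.pi (fun _ : ι ↦ gaussMeasure d σ2) =
      volume.withDensity fun z : ι → EuclideanSpace ℝ (Fin d) ↦
        ENNReal.ofReal (∏ i, gaussPdf d σ2 (z i)) := by
  have (_ : ι) : SigmaFinite (volume.withDensity fun x ↦ ENNReal.ofReal (gaussPdf d σ2 x)) :=
    have := isProbabilityMeasure_gaussMeasure d hσ
    inferInstanceAs (SigmaFinite (gaussMeasure d σ2))
  simp_rw [ENNReal.ofReal_prod_of_nonneg fun _ _ ↦ gaussPdf_nonneg hσ.le _]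
  exact pi_withDensity (fun _ : ι ↦ volume) fun _ ↦ by fun_prop

instance : SFinite (gaussMeasure d σ2) := by
  unfold gaussMeasure
  infer_instance

lemma lintegral_gaussMeasure {f : EuclideanSpace ℝ (Fin d) → ℝ≥0∞} (hf : Measurable f) :
    ∫⁻ x, f x ∂gaussMeasure d σ2 = ∫⁻ x, ENNReal.ofReal (gaussPdf d σ2 x) * f x :=
  lintegral_withDensity_eq_lintegral_mul _ (by fun_prop) hf

lemma lintegral_lintegral_gaussMeasure
    {f : EuclideanSpace ℝ (Fin d) → EuclideanSpace ℝ (Fin d) → ℝ≥0∞}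
    (hf : Measurable (Function.uncurry f)) :
    ∫⁻ x, ∫⁻ y, f x y ∂gaussMeasure d σ2 ∂gaussMeasure d σ2 =
      ∫⁻ x, ∫⁻ y, ENNReal.ofReal (gaussPdf d σ2 x) *
        (ENNReal.ofReal (gaussPdf d σ2 y) * f x y) := by
  simp_rw [lintegral_gaussMeasure hf.lintegral_prod_right,
    lintegral_gaussMeasure hf.of_uncurry_left, lintegral_const_mul' _ _ ENNReal.ofReal_ne_top]

lemma ofReal_gaussPdf_mul_ofReal_gaussPdf_mul_exp (hσ : 0 ≤ σ2) (β : ℝ)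
    (x y : EuclideanSpace ℝ (Fin d)) :
    ENNReal.ofReal (gaussPdf d σ2 x) *
        (ENNReal.ofReal (gaussPdf d σ2 y) * ENNReal.ofReal (exp (-β * ‖x - y‖ ^ 2))) =
      ENNReal.ofReal (((2 * π * σ2) ^ (-(d : ℝ) / 2)) ^ 2) * ENNReal.ofReal
        (exp (-(1 / (2 * σ2) * ‖x‖ ^ 2 + 1 / (2 * σ2) * ‖y‖ ^ 2 + β * ‖x - y‖ ^ 2))) := by
  rw [← ENNReal.ofReal_mul (gaussPdf_nonneg hσ y), ← ENNReal.ofReal_mul (gaussPdf_nonneg hσ x),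
    ← ENNReal.ofReal_mul (by positivity), gaussPdf_eq_mul_exp_neg_mul, gaussPdf_eq_mul_exp_neg_mul,
    neg_add, neg_add, exp_add, exp_add]
  simp only [neg_mul]
  ring_nf

lemma sq_rpow_neg_mul_div_rpow {a q : ℝ} (ha : 0 < a) (hq : 0 ≤ q) (r : ℝ) :
    (a ^ (-r)) ^ 2 * (a ^ 2 / q) ^ r = q ^ (-r) := by
  rw [rpow_pow_comm ha.le, div_rpow (by positivity) hq, rpow_neg (by positivity), rpow_neg hq]
  field_simp

lemma lintegral_exp_neg_mul_sq_norm_sub_gaussMeasure (d : ℕ) {β : ℝ} (hσ : 0 < σ2)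
    (hβ : 0 < 4 * σ2 * β + 1) :
    ∫⁻ x, ∫⁻ y, ENNReal.ofReal (exp (-β * ‖x - y‖ ^ 2)) ∂gaussMeasure d σ2 ∂gaussMeasure d σ2 =
      ENNReal.ofReal ((4 * σ2 * β + 1) ^ (-(d : ℝ) / 2)) := by
  have coeff : 1 / (2 * σ2) * (1 / (2 * σ2)) + 1 / (2 * σ2) * β + β * (1 / (2 * σ2)) =
      (4 * σ2 * β + 1) / (2 * σ2) ^ 2 := by
    field_simp
    ring
  have inner_coeff_pos : 0 < 1 / (2 * σ2) + β := by
    have : 1 / (2 * σ2) + β = (2 * σ2 * β + 1) / (2 * σ2) := by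
      field_simp
      ring
    rw [this]
    exact div_pos (by linarith) (by positivity)
  have base : π ^ 2 / ((4 * σ2 * β + 1) / (2 * σ2) ^ 2) =
      (2 * π * σ2) ^ 2 / (4 * σ2 * β + 1) := by
    field_simp
  rw [lintegral_lintegral_gaussMeasure (f := fun x y ↦ ENNReal.ofReal (exp (-β * ‖x - y‖ ^ 2)))
    (by fun_prop)]
  simp_rw [ofReal_gaussPdf_mul_ofReal_gaussPdf_mul_exp hσ.le,
    lintegral_const_mul' _ _ ENNReal.ofReal_ne_top]
  rw [lintegral_lintegral_exp_neg_sq_norm_add_sq_norm_add_sq_norm_sub inner_coeff_pos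
      (by rw [coeff]; positivity), coeff, base, finrank_euclideanSpace_fin,
    ← ENNReal.ofReal_mul (by positivity), neg_div,
    sq_rpow_neg_mul_div_rpow (by positivity) hβ.le]

end GaussianMeasure

section JointLaw

/-- The conditional law of the edge weights given the latent positions, as a Markov kernel: it is
the second factor in the disintegration of `jointLaw`. -/
noncomputable def edgeKernel (d N : ℕ) (β : ℝ) (α : Fin N → ℝ) :
    Kernel (Fin N → EuclideanSpace ℝ (Fin d)) (Pairs N → ℕ) where
  toFun z := Measure.pi fun p : Pairs N ↦
    poissonMeasure (exp (α p.1.1 + α p.1.2 - β * ‖z p.1.1 - z p.1.2‖ ^ 2)).toNNReal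
  measurable' := measurable_measure_pi fun _ ↦ measurable_poissonMeasure.comp (by fun_prop)

variable {d N : ℕ} {β : ℝ} {α : Fin N → ℝ}

instance : IsMarkovKernel (edgeKernel d N β α) :=
  ⟨fun _ ↦ inferInstanceAs (IsProbabilityMeasure (Measure.pi _))⟩

lemma lintegral_edgeKernel (z : Fin N → EuclideanSpace ℝ (Fin d)) (p : Pairs N) :
    ∫⁻ y, (y p : ℝ≥0∞) ∂edgeKernel d N β α z =
      ENNReal.ofReal (exp (α p.1.1 + α p.1.2 - β * ‖z p.1.1 - z p.1.2‖ ^ 2)) :=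
  ((measurePreserving_eval (fun p : Pairs N ↦ poissonMeasure
    (exp (α p.1.1 + α p.1.2 - β * ‖z p.1.1 - z p.1.2‖ ^ 2)).toNNReal) p).lintegral_comp
      (f := fun n : ℕ ↦ (n : ℝ≥0∞)) (by fun_prop)).trans (lintegral_natCast_poissonMeasure _)

lemma jointLaw_eq_compProd {σ2 : ℝ} (hσ : 0 < σ2) :
    jointLaw d N β α σ2 = (Measure.pi fun _ ↦ gaussMeasure d σ2) ⊗ₘ edgeKernel d N β α := by
  have := isProbabilityMeasure_gaussMeasure d hσ
  rw [Measure.compProd_eq_comp_prod, pi_gaussMeasure_eq_withDensity _ d hσ, jointLaw]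
  congr 1
  funext z
  rw [Kernel.prod_apply, Kernel.id_apply, Measure.dirac_prod]
  rfl

lemma lintegral_edge_jointLaw {σ2 : ℝ} (hσ : 0 < σ2) (hβ : 0 < 4 * σ2 * β + 1) (p : Pairs N) :
    ∫⁻ zy, (zy.2 p : ℝ≥0∞) ∂jointLaw d N β α σ2 =
      ENNReal.ofReal (exp (α p.1.1 + α p.1.2) * (4 * σ2 * β + 1) ^ (-(d : ℝ) / 2)) := by
  have := isProbabilityMeasure_gaussMeasure d hσ
  rw [jointLaw_eq_compProd hσ, Measure.lintegral_compProd (by fun_prop)]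
  simp_rw [lintegral_edgeKernel, sub_eq_add_neg (α _ + α _), ← neg_mul, exp_add (α _ + α _),
    ENNReal.ofReal_mul (exp_pos _).le]
  rw [lintegral_const_mul _ (by fun_prop),
    (measurePreserving_prodMk_eval (fun _ ↦ gaussMeasure d σ2) p.2.ne).lintegral_comp
      (f := fun xy ↦ ENNReal.ofReal (exp (-β * ‖xy.1 - xy.2‖ ^ 2))) (by fun_prop),
    lintegral_prod _ (by fun_prop), lintegral_exp_neg_mul_sq_norm_sub_gaussMeasure d hσ hβ]

end JointLaw

section Expectations

variable {Ω : Type*} [MeasurableSpace Ω]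

lemma integral_natCast_eq_toReal_lintegral {μ : Measure Ω} {f : Ω → ℕ} (hf : AEMeasurable f μ) :
    ∫ ω, (f ω : ℝ) ∂μ = (∫⁻ ω, (f ω : ℝ≥0∞) ∂μ).toReal := by
  have hf' : AEMeasurable (fun ω ↦ (f ω : ℝ≥0∞)) μ := by fun_prop
  simpa using integral_toReal hf' (ae_of_all _ fun ω ↦ ENNReal.natCast_lt_top (f ω))

lemma lintegral_eq_sum_lintegral_cond_fiber {S : Type*} [Fintype S] [MeasurableSpace S]
    [DiscreteMeasurableSpace S] (μ : Measure Ω) [IsFiniteMeasure μ] {X : Ω → S} (hX : Measurable X)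
    (f : Ω → ℝ≥0∞) :
    ∫⁻ ω, f ω ∂μ = ∑ x, μ (X ⁻¹' {x}) * ∫⁻ ω, f ω ∂(μ[|X ⁻¹' {x}]) := by
  conv_lhs => rw [← sum_meas_smul_cond_fiber hX μ]
  simp_rw [lintegral_finsetSum_measure, lintegral_smul_measure, smul_eq_mul]

end Expectations

namespace MSLS

variable {Ω : Type} [MeasurableSpace Ω] (M : MSLS Ω)

/-- The expected strength of node `i` when the current state is `k`, i.e. the derivative at `1` of
the probability generating function `G̃_k`. -/
noncomputable def stateMean (i : Fin M.N) (k : Fin M.K) : ℝ :=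
  (∑ j ∈ Finset.univ.erase i, exp (M.α i + M.α j)) *
    (4 * M.σ2 k * M.β + 1) ^ (-(M.d : ℝ) / 2)

lemma four_mul_variance_mul_add_one_pos (k : Fin M.K) : 0 < 4 * M.σ2 k * M.β + 1 := by
  have := M.σ2_pos k
  have := M.β_pos
  positivity

lemma stateMean_nonneg (i : Fin M.N) (k : Fin M.K) : 0 ≤ M.stateMean i k := by
  have := M.four_mul_variance_mul_add_one_pos k
  unfold stateMean
  positivity

lemma measurable_strength (i : Fin M.N) (t : ℕ) : Measurable (M.strength i t) := by
  have := M.Y_meas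
  unfold strength
  fun_prop

section LatentSpaceLaw

variable {μ : Measure Ω} {t : ℕ} {k : Fin M.K}

lemma lintegral_edge
    (hμ : μ.map (fun ω ↦ ((fun i ↦ M.Z i k ω), fun p : Pairs M.N ↦ M.Y p.1.1 p.1.2 t ω)) =
      jointLaw M.d M.N M.β M.α (M.σ2 k)) {i j : Fin M.N} (hij : i ≠ j) :
    ∫⁻ ω, (M.Y i j t ω : ℝ≥0∞) ∂μ =
      ENNReal.ofReal (exp (M.α i + M.α j) * (4 * M.σ2 k * M.β + 1) ^ (-(M.d : ℝ) / 2)) := by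
  have hY := M.Y_meas
  have hZ := M.Z_meas
  wlog hlt : i < j generalizing i j
  · simp_rw [M.Y_symm i j, add_comm (M.α i)]
    exact this hij.symm (hij.lt_or_gt.resolve_left hlt)
  rw [← lintegral_edge_jointLaw (M.σ2_pos k) (M.four_mul_variance_mul_add_one_pos k)
    ⟨(i, j), hlt⟩, ← hμ, lintegral_map (by fun_prop) (by fun_prop)]

lemma lintegral_strength
    (hμ : μ.map (fun ω ↦ ((fun i ↦ M.Z i k ω), fun p : Pairs M.N ↦ M.Y p.1.1 p.1.2 t ω)) =
      jointLaw M.d M.N M.β M.α (M.σ2 k)) (i : Fin M.N) :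
    ∫⁻ ω, (M.strength i t ω : ℝ≥0∞) ∂μ = ENNReal.ofReal (M.stateMean i k) := by
  have hY := M.Y_meas
  have hpos := M.four_mul_variance_mul_add_one_pos k
  simp_rw [strength, Nat.cast_sum]
  rw [lintegral_finsetSum _ fun j _ ↦ by fun_prop, stateMean, Finset.sum_mul,
    ENNReal.ofReal_sum_of_nonneg fun j _ ↦ by positivity]
  exact Finset.sum_congr rfl fun j hj ↦ M.lintegral_edge hμ (Finset.ne_of_mem_erase hj).symm

end LatentSpaceLaw

lemma lintegral_cond_state_eq_sum (t : ℕ) (l : Fin M.K) (f : Ω → ℝ≥0∞) :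
    ∫⁻ ω, f ω ∂(M.P[|{ω | M.s t ω = l}]) =
      ∑ k, ENNReal.ofReal (M.q l k) *
        ∫⁻ ω, f ω ∂(M.P[|{ω | M.s t ω = l} ∩ {ω | M.s (t + 1) ω = k}]) := by
  have hms (t : ℕ) (k : Fin M.K) : MeasurableSet {ω | M.s t ω = k} :=
    M.s_meas t (measurableSet_singleton k)
  rw [lintegral_eq_sum_lintegral_cond_fiber _ (M.s_meas (t + 1))]
  refine Finset.sum_congr rfl fun k _ ↦ ?_
  rw [← M.trans_prob t l k, ENNReal.ofReal_toReal (measure_ne_top _ _),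
    ← cond_cond_eq_cond_inter (hms t l) (hms (t + 1) k)]
  rfl

lemma integral_strength_cond_state (i : Fin M.N) (t : ℕ) (k : Fin M.K) :
    ∫ ω, (M.strength i t ω : ℝ) ∂(M.P[|{ω | M.s t ω = k}]) = M.stateMean i k := by
  rw [integral_natCast_eq_toReal_lintegral (M.measurable_strength i t).aemeasurable,
    M.lintegral_strength (M.cond_law_state t k), ENNReal.toReal_ofReal (M.stateMean_nonneg i k)]

lemma integral_strength_cond_prev_state (i : Fin M.N) (t : ℕ) (l : Fin M.K) :
    ∫ ω, (M.strength i (t + 1) ω : ℝ) ∂(M.P[|{ω | M.s t ω = l}]) =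
      ∑ k, M.q l k * M.stateMean i k := by
  have hnonneg (k : Fin M.K) : 0 ≤ M.q l k * M.stateMean i k :=
    mul_nonneg (M.q_nonneg l k) (M.stateMean_nonneg i k)
  have mixture : ∫⁻ ω, (M.strength i (t + 1) ω : ℝ≥0∞) ∂(M.P[|{ω | M.s t ω = l}]) =
      ENNReal.ofReal (∑ k, M.q l k * M.stateMean i k) := by
    rw [M.lintegral_cond_state_eq_sum, ENNReal.ofReal_sum_of_nonneg fun k _ ↦ hnonneg k]
    refine Finset.sum_congr rfl fun k _ ↦ ?_
    rw [ENNReal.ofReal_mul (M.q_nonneg l k)]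
    rcases eq_or_ne (M.q l k) 0 with hq | hq
    · simp [hq]
    · rw [M.lintegral_strength (M.cond_law_pair t l k hq)]
  rw [integral_natCast_eq_toReal_lintegral (M.measurable_strength i _).aemeasurable, mixture,
    ENNReal.toReal_ofReal (Finset.sum_nonneg fun k _ ↦ hnonneg k)]

lemma sum_exp_add_eq_of_forall_add_eq {a : ℝ} (hα : ∀ i j, M.α i + M.α j = a) (i : Fin M.N) :
    ∑ j ∈ Finset.univ.erase i, exp (M.α i + M.α j) = ((M.N : ℝ) - 1) * exp a := by
  simp_rw [hα, Finset.sum_const, Finset.card_erase_of_mem (Finset.mem_univ i), Finset.card_univ,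
    Fintype.card_fin, nsmul_eq_mul, Nat.cast_pred (Fin.pos i)]

end MSLS

theorem statement1_general {Ω : Type} [MeasurableSpace Ω] (M : MSLS Ω) (i : Fin M.N) (t : ℕ)
    (l : Fin M.K) :
    (∫ ω, (M.strength i (t + 1) ω : ℝ) ∂(M.P[|{ω | M.s t ω = l}]) =
      ∑ k, M.q l k *
        ∫ ω, (M.strength i (t + 1) ω : ℝ) ∂(M.P[|{ω | M.s (t + 1) ω = k}])) ∧
    (∫ ω, (M.strength i (t + 1) ω : ℝ) ∂(M.P[|{ω | M.s t ω = l}]) =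
      (∑ j ∈ Finset.univ.erase i, exp (M.α i + M.α j)) *
        ∑ k, M.q l k * (4 * M.σ2 k * M.β + 1) ^ (-(M.d : ℝ) / 2)) := by
  refine ⟨?_, ?_⟩
  · simp_rw [M.integral_strength_cond_prev_state, M.integral_strength_cond_state]
  · rw [M.integral_strength_cond_prev_state, Finset.mul_sum]
    exact Finset.sum_congr rfl fun k _ ↦ mul_left_comm _ _ _

/-- Under the MS-LS model with `α_i + α_j = α` for all pairs, the expected
nodal strength given the previous state `l` is the `q_{lk}`-mixture of the within-state
expected nodal strengths, and equals `(N-1) e^α Σ_k q_{lk} (4σ_k²β + 1)^{-d/2}`. -/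
theorem statement1 {Ω : Type} [MeasurableSpace Ω] (M : MSLS Ω) (a : ℝ)
    (hα : ∀ i j, M.α i + M.α j = a) (i : Fin M.N) (t : ℕ) (l : Fin M.K) :
    (∫ ω, (M.strength i (t + 1) ω : ℝ) ∂(M.P[|{ω | M.s t ω = l}]) =
      ∑ k, M.q l k *
        ∫ ω, (M.strength i (t + 1) ω : ℝ) ∂(M.P[|{ω | M.s (t + 1) ω = k}])) ∧
    (∫ ω, (M.strength i (t + 1) ω : ℝ) ∂(M.P[|{ω | M.s t ω = l}]) =
      ((M.N : ℝ) - 1) * Real.exp a *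
        ∑ k, M.q l k * (4 * M.σ2 k * M.β + 1) ^ (-(M.d : ℝ) / 2)) := by
  rw [← M.sum_exp_add_eq_of_forall_add_eq hα i]
  exact statement1_general M i t l
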